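/- Let m ≥ 2 and let B_1,…,B_n (n ≥ 2) be a partition of {1,…,m} into nonempty blocks; write k ≁ l if k,l lie in different blocks, and for each i let F_i = {x ∈ ℝ^m : x_k = 0 for all k ∉ B_i}. Let h and h̃ be smooth positive functions on a neighborhood of 0 in ℝ^m such that (i) ∂²(log h)/∂x_k∂x_l = ∂²(log h̃)/∂x_k∂x_l on a neighborhood of 0 for every pair k ≁ l, and (ii) h(x) = h̃(x) for every x in a neighborhood of 0 lying in the union F_1 ∪ … ∪ F_n. Then h = h̃ on a neighborhood of 0. -/

import Mathlib

open MeasureTheory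

noncomputable section

/-- Second mixed partial derivative `∂²(log h)/∂x_k∂x_l` at `x`. -/
def logpd2 {m : ℕ} (h : (Fin m → ℝ) → ℝ) (k l : Fin m) (x : Fin m → ℝ) : ℝ :=
  fderiv ℝ (fun y => fderiv ℝ (fun z => Real.log (h z)) y (Pi.single k (1:ℝ)))
    x (Pi.single l 1)

/-!
Write `f = log h - log h̃`. If `D²f(·)(z)(y)` vanishes on the parallelogram at `a` spanned by `y`
and `z`, then `f (a + y + z) - f (a + y) = f (a + z) - f a`. Splitting off one block of coordinates
at a time, one finds that a function whose cross-block mixed second derivatives vanish is, near `0`,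
equal to `f 0` plus the sum of the increments `f (xᵢ) - f 0`, where `xᵢ` is the component of `x`
along the `i`-th block. Since `xᵢ` lies in `Fᵢ`, where `f` vanishes, `f x = 0`.
-/

open Filter Set Topology

section LineDeriv

variable {E F : Type*} [AddCommGroup E] [Module ℝ E] [NormedAddCommGroup F] [NormedSpace ℝ F]
  {f f' : E → F} {a x v y z : E}

theorem apply_add_eq_of_hasLineDerivAt_zero
    (hf : ∀ t ∈ Icc (0 : ℝ) 1, HasLineDerivAt ℝ f 0 (x + t • v) v) : f (x + v) = f x := by
  have hderiv : ∀ t ∈ Icc (0 : ℝ) 1, HasDerivAt (fun t : ℝ => f (x + t • v)) 0 t := by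
    intro t ht
    have h := hf t ht
    rw [HasLineDerivAt, ← sub_self t] at h
    simpa [add_assoc, ← add_smul] using h.comp_sub_const t t
  simpa using constant_of_has_deriv_right_zero
    (fun t ht => (hderiv t ht).continuousAt.continuousWithinAt)
    (fun t ht => (hderiv t (Ico_subset_Icc_self ht)).hasDerivWithinAt)
    1 (right_mem_Icc.2 zero_le_one)

theorem parallelogram_increment_eq_of_mixed_hasLineDerivAt_zero
    (hf : ∀ s ∈ Icc (0 : ℝ) 1, ∀ t ∈ Icc (0 : ℝ) 1,
      HasLineDerivAt ℝ f (f' (a + s • y + t • z)) (a + s • y + t • z) y)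
    (hf' : ∀ s ∈ Icc (0 : ℝ) 1, ∀ t ∈ Icc (0 : ℝ) 1,
      HasLineDerivAt ℝ f' 0 (a + s • y + t • z) z) :
    f (a + y + z) - f (a + y) = f (a + z) - f a := by
  refine apply_add_eq_of_hasLineDerivAt_zero (f := fun w => f (w + z) - f w) fun s hs => ?_
  have hderiv_const : f' (a + s • y + z) = f' (a + s • y) :=
    apply_add_eq_of_hasLineDerivAt_zero (hf' s hs)
  have h₀ := hf s hs 0 (left_mem_Icc.2 zero_le_one)
  have h₁ := hf s hs 1 (right_mem_Icc.2 zero_le_one)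
  rw [zero_smul, add_zero] at h₀
  rw [one_smul, hderiv_const] at h₁
  simpa [HasLineDerivAt, add_right_comm] using HasDerivAt.fun_sub h₁ h₀

end LineDeriv

section SecondDerivative

variable {𝕜 E F : Type*} [NontriviallyNormedField 𝕜] [NormedAddCommGroup E] [NormedSpace 𝕜 E]
  [NormedAddCommGroup F] [NormedSpace 𝕜 F] {f g : E → F} {x : E}

theorem differentiableAt_fderiv_of_contDiffAt_two (hf : ContDiffAt 𝕜 2 f x) :
    DifferentiableAt 𝕜 (fderiv 𝕜 f) x :=
  (hf.fderiv_right (m := 1) (by norm_num)).differentiableAt one_ne_zero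

theorem fderiv_fderiv_sub_apply (hf : ContDiffAt 𝕜 2 f x) (hg : ContDiffAt 𝕜 2 g x) (u v : E) :
    fderiv 𝕜 (fderiv 𝕜 (f - g)) x u v =
      fderiv 𝕜 (fderiv 𝕜 f) x u v - fderiv 𝕜 (fderiv 𝕜 g) x u v := by
  simpa [iteratedFDeriv_two_apply] using DFunLike.congr_fun (iteratedFDeriv_sub_apply hf hg) ![u, v]

end SecondDerivative

section Increment

variable {E F : Type*} [NormedAddCommGroup E] [NormedSpace ℝ E] [NormedAddCommGroup F]
  [NormedSpace ℝ F] {f : E → F} {a y z : E}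

theorem parallelogram_increment_eq_of_fderiv_fderiv_eq_zero
    (hf : ∀ s ∈ Icc (0 : ℝ) 1, ∀ t ∈ Icc (0 : ℝ) 1, ContDiffAt ℝ 2 f (a + s • y + t • z))
    (hmixed : ∀ s ∈ Icc (0 : ℝ) 1, ∀ t ∈ Icc (0 : ℝ) 1,
      fderiv ℝ (fderiv ℝ f) (a + s • y + t • z) z y = 0) :
    f (a + y + z) - f (a + y) = f (a + z) - f a := by
  refine parallelogram_increment_eq_of_mixed_hasLineDerivAt_zero
    (f' := fun x => fderiv ℝ f x y) (fun s hs t ht => ?_) fun s hs t ht => ?_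
  · exact ((hf s hs t ht).differentiableAt two_ne_zero).hasFDerivAt.hasLineDerivAt y
  · have hD := differentiableAt_fderiv_of_contDiffAt_two (hf s hs t ht)
    have h := (hD.hasFDerivAt.clm_apply (hasFDerivAt_const y _)).hasLineDerivAt z
    simpa [hmixed s hs t ht] using h

theorem increment_eq_sum_of_pairwise_fderiv_fderiv_eq_zero {ι : Type*} {s : Finset ι} {v : ι → E}
    {C : Set E} (hC : ∀ t ∈ Icc (0 : ι → ℝ) 1, a + ∑ i ∈ s, t i • v i ∈ C)
    (hf : ∀ x ∈ C, ContDiffAt ℝ 2 f x)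
    (hmixed : ∀ x ∈ C, (s : Set ι).Pairwise fun i j => fderiv ℝ (fderiv ℝ f) x (v i) (v j) = 0) :
    f (a + ∑ i ∈ s, v i) - f a = ∑ i ∈ s, (f (a + v i) - f a) := by
  classical
  induction s using Finset.induction_on with
  | empty => simp
  | insert i s his ih =>
    have hbox : ∀ σ ∈ Icc (0 : ℝ) 1, ∀ t ∈ Icc (0 : ι → ℝ) 1,
        a + σ • v i + ∑ j ∈ s, t j • v j ∈ C := by
      intro σ hσ t ht
      have hmem : Function.update t i σ ∈ Icc (0 : ι → ℝ) 1 :=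
        ⟨le_update_iff.2 ⟨hσ.1, fun j _ => ht.1 j⟩, update_le_iff.2 ⟨hσ.2, fun j _ => ht.2 j⟩⟩
      have hsum : ∑ j ∈ s, Function.update t i σ j • v j = ∑ j ∈ s, t j • v j :=
        Finset.sum_congr rfl fun j hj => by
          rw [Function.update_of_ne (ne_of_mem_of_not_mem hj his)]
      simpa [Finset.sum_insert his, hsum, add_assoc] using hC _ hmem
    have hpar : ∀ σ ∈ Icc (0 : ℝ) 1, ∀ τ ∈ Icc (0 : ℝ) 1,
        a + σ • v i + τ • ∑ j ∈ s, v j ∈ C := by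
      intro σ hσ τ hτ
      rw [Finset.smul_sum]
      exact hbox σ hσ (fun _ => τ) ⟨fun _ => hτ.1, fun _ => hτ.2⟩
    have hsplit : f (a + v i + ∑ j ∈ s, v j) - f (a + v i) = f (a + ∑ j ∈ s, v j) - f a := by
      refine parallelogram_increment_eq_of_fderiv_fderiv_eq_zero
        (fun σ hσ τ hτ => hf _ (hpar σ hσ τ hτ)) fun σ hσ τ hτ => ?_
      rw [map_sum, sum_apply]
      exact Finset.sum_eq_zero fun j hj => hmixed _ (hpar σ hσ τ hτ)
        (Finset.mem_insert_of_mem hj) (Finset.mem_insert_self i s) (ne_of_mem_of_not_mem hj his)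
    have hrest : f (a + ∑ j ∈ s, v j) - f a = ∑ j ∈ s, (f (a + v j) - f a) :=
      ih (fun t ht => by simpa using hbox 0 (left_mem_Icc.2 zero_le_one) t ht)
        fun x hx => (hmixed x hx).mono (Finset.coe_subset.2 (Finset.subset_insert i s))
    rw [Finset.sum_insert his, Finset.sum_insert his, ← hrest, ← hsplit, ← add_assoc]
    abel

theorem eventually_increment_eq_sum_of_fderiv_fderiv_eq_zero {ι : Type*} [Fintype ι]
    {P : ι → E →L[ℝ] E} (hP : ∑ i, P i = ContinuousLinearMap.id ℝ E) (hf : ContDiffAt ℝ 2 f a)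
    (hmixed : ∀ᶠ x in 𝓝 a, Pairwise fun i j =>
      ∀ u v, fderiv ℝ (fderiv ℝ f) x (P i u) (P j v) = 0) :
    ∀ᶠ v in 𝓝 0, f (a + v) - f a = ∑ i, (f (a + P i v) - f a) := by
  set C := {x | ContDiffAt ℝ 2 f x ∧
    Pairwise fun i j => ∀ u v, fderiv ℝ (fderiv ℝ f) x (P i u) (P j v) = 0}
  have hC : C ∈ 𝓝 a := (hf.eventually (by simp)).and hmixed
  have hbox : ∀ᶠ v in 𝓝 (0 : E), ∀ t ∈ Icc (0 : ι → ℝ) 1, a + ∑ i, t i • P i v ∈ C := by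
    refine isCompact_Icc.eventually_forall_of_forall_eventually fun t _ => ?_
    have hcont : Continuous fun p : E × (ι → ℝ) => a + ∑ i, p.2 i • P i p.1 := by fun_prop
    exact hcont.continuousAt.eventually_mem (by simpa using hC)
  filter_upwards [hbox] with v hv
  have hsum : ∑ i, P i v = v := by rw [← sum_apply, hP]; rfl
  simpa only [hsum] using increment_eq_sum_of_pairwise_fderiv_fderiv_eq_zero hv
    (fun x hx => hx.1) fun x hx i _ j _ hij => hx.2 hij (v) v

end Increment

section CoordProj

variable {κ ι F : Type*} [DecidableEq κ] [NormedAddCommGroup F] [NormedSpace ℝ F]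

/-- The projection of `ℝ^κ` onto the coordinate subspace `F_s = {x : x_k = 0 for k ∉ s}` that kills
the coordinates outside `s`, as a continuous linear endomorphism of `ℝ^κ`. -/
def coordProj (s : Finset κ) : (κ → ℝ) →L[ℝ] (κ → ℝ) :=
  ∑ k ∈ s, (ContinuousLinearMap.single ℝ (fun _ : κ => ℝ) k).comp (ContinuousLinearMap.proj k)

theorem coordProj_apply (s : Finset κ) (v : κ → ℝ) :
    coordProj s v = ∑ k ∈ s, Pi.single k (v k) := by
  simp [coordProj]

theorem coordProj_apply_apply (s : Finset κ) (v : κ → ℝ) (k : κ) :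
    coordProj s v k = if k ∈ s then v k else 0 := by
  rw [coordProj_apply, Finset.sum_apply, Finset.sum_pi_single]

theorem sum_coordProj_of_partition [Fintype ι] {B : ι → Finset κ}
    (hdisj : Pairwise fun i j => Disjoint (B i) (B j)) (hcover : ∀ k, ∃ i, k ∈ B i) :
    ∑ i, coordProj (B i) = ContinuousLinearMap.id ℝ (κ → ℝ) := by
  ext v k
  obtain ⟨i, hki⟩ := hcover k
  have hnotMem : ∀ j, j ≠ i → k ∉ B j := fun j hji hkj =>
    Finset.disjoint_left.1 (hdisj hji) hkj hki
  rw [sum_apply, Finset.sum_apply, Fintype.sum_eq_single i fun j hji => by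
    rw [coordProj_apply_apply, if_neg (hnotMem j hji)], coordProj_apply_apply, if_pos hki]
  rfl

theorem clm_coordProj_coordProj_eq_zero {s t : Finset κ} (T : (κ → ℝ) →L[ℝ] (κ → ℝ) →L[ℝ] F)
    (hT : ∀ k ∈ s, ∀ l ∈ t, T (Pi.single k 1) (Pi.single l 1) = 0) (u v : κ → ℝ) :
    T (coordProj s u) (coordProj t v) = 0 := by
  have hsmul : ∀ (k : κ) (c : ℝ), (Pi.single k c : κ → ℝ) = c • Pi.single k 1 := by
    simp [← Pi.single_smul]
  simp only [coordProj_apply, map_sum, sum_apply]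
  refine Finset.sum_eq_zero fun l hl => Finset.sum_eq_zero fun k hk => ?_
  rw [hsmul k, hsmul l, map_smul, map_smul, smul_apply, hT k hk l hl, smul_zero, smul_zero]

theorem eventuallyEq_of_mixed_fderiv_fderiv_eq [Fintype κ] [Finite ι] [Nonempty ι]
    {B : ι → Finset κ} (hdisj : Pairwise fun i j => Disjoint (B i) (B j))
    (hcover : ∀ k, ∃ i, k ∈ B i) {f g : (κ → ℝ) → F}
    (hf : ContDiffAt ℝ 2 f 0) (hg : ContDiffAt ℝ 2 g 0)
    (hmixed : ∀ᶠ x in 𝓝 0, Pairwise fun i j => ∀ k ∈ B i, ∀ l ∈ B j,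
      fderiv ℝ (fderiv ℝ f) x (Pi.single k 1) (Pi.single l 1) =
        fderiv ℝ (fderiv ℝ g) x (Pi.single k 1) (Pi.single l 1))
    (hsub : ∀ i, ∀ᶠ x in 𝓝 0, (∀ k, k ∉ B i → x k = 0) → f x = g x) :
    f =ᶠ[𝓝 0] g := by
  have := Fintype.ofFinite ι
  have hmixed_sub : ∀ᶠ x in 𝓝 0, Pairwise fun i j => ∀ u v,
      fderiv ℝ (fderiv ℝ (f - g)) x (coordProj (B i) u) (coordProj (B j) v) = 0 := by
    filter_upwards [hf.eventually (by simp), hg.eventually (by simp), hmixed]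
      with x hfx hgx hx i j hij
    refine clm_coordProj_coordProj_eq_zero _ fun k hk l hl => ?_
    rw [fderiv_fderiv_sub_apply hfx hgx, hx hij k hk l hl, sub_self]
  have hsub_proj : ∀ᶠ v in 𝓝 0, ∀ i, (f - g) (coordProj (B i) v) = 0 := by
    refine eventually_all.2 fun i => ?_
    have hlim : Tendsto (coordProj (B i)) (𝓝 0) (𝓝 0) := by
      simpa using (coordProj (B i)).continuous.tendsto 0
    filter_upwards [hlim.eventually (hsub i)] with v hv
    exact sub_eq_zero.2 (hv fun k hk => by rw [coordProj_apply_apply, if_neg hk])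
  have hzero : (f - g) 0 = 0 := by
    simpa using hsub_proj.self_of_nhds (Classical.arbitrary ι)
  have hincr : ∀ᶠ v in 𝓝 0, (f - g) (0 + v) - (f - g) 0 =
      ∑ i, ((f - g) (0 + coordProj (B i) v) - (f - g) 0) :=
    eventually_increment_eq_sum_of_fderiv_fderiv_eq_zero
      (sum_coordProj_of_partition hdisj hcover) (hf.sub hg) hmixed_sub
  filter_upwards [hincr, hsub_proj] with v hv hproj
  have hsub_zero : (f - g) v = 0 := by
    simpa only [zero_add, hzero, sub_zero, hproj, Finset.sum_const_zero] using hv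
  exact sub_eq_zero.1 hsub_zero

end CoordProj

theorem logpd2_eq_fderiv_fderiv {m : ℕ} {h : (Fin m → ℝ) → ℝ} {x : Fin m → ℝ}
    (hh : ContDiffAt ℝ 2 (fun z => Real.log (h z)) x) (k l : Fin m) :
    logpd2 h k l x =
      fderiv ℝ (fderiv ℝ fun z => Real.log (h z)) x (Pi.single l 1) (Pi.single k 1) := by
  rw [logpd2, fderiv_clm_apply (differentiableAt_fderiv_of_contDiffAt_two hh)
    (differentiableAt_const _)]
  simp

theorem stmt8_general {m : ℕ} {ι : Type*} [Finite ι] [Nonempty ι] {B : ι → Finset (Fin m)}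
    (hdisj : Pairwise fun i j => Disjoint (B i) (B j)) (hcover : ∀ k, ∃ i, k ∈ B i)
    {h ht : (Fin m → ℝ) → ℝ} (hsm : ContDiffAt ℝ 2 h 0) (htsm : ContDiffAt ℝ 2 ht 0)
    (hpos : 0 < h 0)
    (hK : ∀ k l, (¬ ∃ i, k ∈ B i ∧ l ∈ B i) → logpd2 h k l =ᶠ[𝓝 0] logpd2 ht k l)
    (hbd : ∀ i, ∀ᶠ x in 𝓝 0, (∀ k, k ∉ B i → x k = 0) → h x = ht x) :
    h =ᶠ[𝓝 0] ht := by
  have h_zero_eq : h 0 = ht 0 := (hbd (Classical.arbitrary ι)).self_of_nhds fun _ _ => rfl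
  have htpos : 0 < ht 0 := h_zero_eq ▸ hpos
  have hlog : ContDiffAt ℝ 2 (fun x => Real.log (h x)) 0 := hsm.log hpos.ne'
  have htlog : ContDiffAt ℝ 2 (fun x => Real.log (ht x)) 0 := htsm.log htpos.ne'
  have hmixed : ∀ᶠ x in 𝓝 0, Pairwise fun i j => ∀ k ∈ B i, ∀ l ∈ B j,
      fderiv ℝ (fderiv ℝ fun z => Real.log (h z)) x (Pi.single k 1) (Pi.single l 1) =
        fderiv ℝ (fderiv ℝ fun z => Real.log (ht z)) x (Pi.single k 1) (Pi.single l 1) := by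
    have hK_all := eventually_all.2 fun k => eventually_all.2 fun l =>
      eventually_imp_distrib_left.2 (hK k l)
    filter_upwards [hlog.eventually (by simp), htlog.eventually (by simp), hK_all]
      with x hx htx hKx i j hij k hk l hl
    rw [← logpd2_eq_fderiv_fderiv hx, ← logpd2_eq_fderiv_fderiv htx]
    refine hKx l k fun ⟨s, hls, hks⟩ => hij ?_
    have heq : ∀ {k i}, k ∈ B i → k ∈ B s → i = s := fun hi hs =>
      hdisj.eq fun hd => Finset.disjoint_left.1 hd hi hs
    exact (heq hk hks).trans (heq hl hls).symm
  have hlog_eq : (fun x => Real.log (h x)) =ᶠ[𝓝 0] fun x => Real.log (ht x) :=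
    eventuallyEq_of_mixed_fderiv_fderiv_eq hdisj hcover hlog htlog hmixed
      fun i => (hbd i).mono fun x hx hxi => congrArg Real.log (hx hxi)
  filter_upwards [hlog_eq, hsm.continuousAt.eventually_const_lt hpos,
    htsm.continuousAt.eventually_const_lt htpos] with x hx hhx hhtx
  exact Real.log_injOn_pos hhx hhtx hx

/-- Two smooth positive densities with the same cross-block mixed
logarithmic second derivatives near `0` which agree on the union of the coordinate
subspaces `F_i = {x : x_k = 0 for k ∉ B_i}` near `0` agree on a neighbourhood of `0`. -/
theorem stmt8 {m n : ℕ} (hm : 2 ≤ m) (hn : 2 ≤ n)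
    (B : Fin n → Finset (Fin m))
    (hBne : ∀ i, (B i).Nonempty)
    (hBdisj : ∀ i j, i ≠ j → Disjoint (B i) (B j))
    (hBcover : ∀ k, ∃ i, k ∈ B i)
    (h ht : (Fin m → ℝ) → ℝ)
    (V : Set (Fin m → ℝ)) (hV : IsOpen V) (h0V : (0 : Fin m → ℝ) ∈ V)
    (hsm : ContDiffOn ℝ (⊤ : ℕ∞) h V) (hpos : ∀ x ∈ V, 0 < h x)
    (htsm : ContDiffOn ℝ (⊤ : ℕ∞) ht V) (htpos : ∀ x ∈ V, 0 < ht x)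
    (hK : ∀ k l : Fin m, (¬ ∃ s : Fin n, k ∈ B s ∧ l ∈ B s) →
      ∀ x ∈ V, logpd2 h k l x = logpd2 ht k l x)
    (hbd : ∀ x ∈ V, (∃ i : Fin n, ∀ k, k ∉ B i → x k = 0) → h x = ht x) :
    ∃ U : Set (Fin m → ℝ), IsOpen U ∧ (0 : Fin m → ℝ) ∈ U ∧
      ∀ x ∈ U, h x = ht x := by
  have hVnhds : V ∈ 𝓝 0 := hV.mem_nhds h0V
  have : Nonempty (Fin n) := Fin.pos_iff_nonempty.1 (by omega)
  have two_le : (2 : WithTop ℕ∞) ≤ (⊤ : ℕ∞) := WithTop.coe_le_coe.2 le_top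
  obtain ⟨U, hU, hUo, h0U⟩ := eventually_nhds_iff.1 <| stmt8_general hBdisj hBcover
    ((hsm.contDiffAt hVnhds).of_le two_le) ((htsm.contDiffAt hVnhds).of_le two_le) (hpos 0 h0V)
    (fun k l hkl => eventually_of_mem hVnhds (hK k l hkl))
    fun i => eventually_of_mem hVnhds fun x hx hxi => hbd x hx ⟨i, hxi⟩
  exact ⟨U, hUo, h0U, hU⟩
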